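/- For elements a, b of the free commutative monoid [X] on X = {x_1, x_2, …} (identified with finitely supported functions ℕ⁺ → ℕ), the relation a ≤_𝔠 b, meaning that a ≤ b holds for every standard term order on [X], holds if and only if b can be obtained from a by a finite sequence of elementary steps of the two forms: c ↦ c + e_i (multiply by a variable x_i), and c ↦ c − e_i + e_{i+1} when c_i > 0 (replace one occurrence of x_i by x_{i+1}), where e_i denotes the i-th standard unit vector. -/

import Mathlib

/-- A standard term order on the free monoid `X*` on the countable alphabet
`X = {x₁, x₂, …}`, whose words we represent as lists of positive integers
(the word `x_{i₁} ⋯ x_{i_d}` is the list `[i₁, …, i_d]`).  It is a strict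
total order such that the empty word `1` is smallest, which is compatible
with two-sided multiplication (concatenation), and with `x₁ < x₂ < ⋯`. -/
structure StdTermOrder where
  lt : List ℕ+ → List ℕ+ → Prop
  irrefl : ∀ a, ¬ lt a a
  trans : ∀ a b c, lt a b → lt b c → lt a c
  total : ∀ a b, a ≠ b → lt a b ∨ lt b a
  one_lt : ∀ t, t ≠ [] → lt [] t
  mul_lt : ∀ a b s t, lt s t → lt (a ++ s ++ b) (a ++ t ++ b)
  std : ∀ i j : ℕ+, i < j → lt [i] [j]

/-- The partial order `𝔑`, the intersection of all standard term orders: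
`m ≤_𝔑 m'` iff `m ≤ m'` holds for every standard term order on `X*`. -/
def Nle (m m' : List ℕ+) : Prop := ∀ T : StdTermOrder, m = m' ∨ T.lt m m'

/-- The strict version of `𝔑`. -/
def Nlt (m m' : List ℕ+) : Prop := Nle m m' ∧ m ≠ m'

/-- `m'` covers `m` in the partial order `𝔑`. -/
def NCovers (m m' : List ℕ+) : Prop :=
  Nlt m m' ∧ ∀ k, Nlt m k → ¬ Nlt k m'

/-- A standard term order on the free abelian monoid `[X]`, whose elements we
represent as finitely supported functions `ℕ+ →₀ ℕ` (exponent vectors): a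
strict total order with `1` (i.e. `0`) smallest, compatible with
multiplication (addition of exponent vectors), and with `x₁ < x₂ < ⋯`. -/
structure CStdTermOrder where
  lt : (ℕ+ →₀ ℕ) → (ℕ+ →₀ ℕ) → Prop
  irrefl : ∀ a, ¬ lt a a
  trans : ∀ a b c, lt a b → lt b c → lt a c
  total : ∀ a b, a ≠ b → lt a b ∨ lt b a
  one_lt : ∀ t, t ≠ 0 → lt 0 t
  mul_lt : ∀ t s s', lt s s' → lt (t + s) (t + s')
  std : ∀ i j : ℕ+, i < j → lt (Finsupp.single i 1) (Finsupp.single j 1)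

/-- The partial order `𝔠` on `[X]`, the intersection of all standard term
orders on `[X]`. -/
def Cle (a b : ℕ+ →₀ ℕ) : Prop := ∀ T : CStdTermOrder, a = b ∨ T.lt a b

/-- The elementary steps in `[X]`: multiply by a variable `xᵢ`, or replace one
occurrence of `xᵢ` by `x_{i+1}` (stated additively, without subtraction:
`c' = c - eᵢ + e_{i+1}` iff `c' + eᵢ = c + e_{i+1}`). -/
def CStep (c c' : ℕ+ →₀ ℕ) : Prop :=
  (∃ i : ℕ+, c' = c + Finsupp.single i 1) ∨
  (∃ i : ℕ+, 0 < c i ∧ c' + Finsupp.single i 1 = c + Finsupp.single (i + 1) 1)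

/-!
Both relations amount to `∑_{i ≥ k} a_i ≤ ∑_{i ≥ k} b_i` for every `k`. If `a ≤_𝔠 b`, each of these
inequalities follows from the term order that compares the tail sums from `k` and breaks ties
colexicographically. Conversely, given these inequalities, let `x_n` be the largest variable in `a`;
the tail sum at `n` supplies a variable `x_m` in `b` with `n ≤ m`. Raising `x_n` to `x_m` takes
elementary steps, and cancelling `x_n` from `a` and `x_m` from `b` preserves the inequalities: up to
`n` both tail sums drop by one, and beyond `n` those of `a` vanish.
-/

open Finsupp Relation

/-- The standard term order that compares exponent vectors by their `w`-weighted degree and breaks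
ties at the largest index where they differ (colexicographically). -/
def CStdTermOrder.ofWeight {M : Type*} [AddCommMonoid M] [LinearOrder M]
    [IsOrderedCancelAddMonoid M] (w : ℕ+ → M) (hw : Monotone w) (hw₁ : 0 ≤ w 1) :
    CStdTermOrder where
  lt a b := toLex (weight w a, toColex a) < toLex (weight w b, toColex b)
  irrefl _ := lt_irrefl _
  trans _ _ _ := lt_trans
  total _ _ hab := lt_or_gt_of_ne fun h =>
    hab (toColex.injective (Prod.mk.inj (toLex.injective h)).2)
  one_lt t ht := by
    have hweight : weight w (0 : ℕ+ →₀ ℕ) ≤ weight w t := by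
      rw [map_zero, weight_apply]
      exact Finset.sum_nonneg fun i _ => nsmul_nonneg (hw₁.trans (hw one_le)) _
    have hcolex : toColex 0 < toColex t :=
      (toColex_monotone zero_le).lt_of_ne fun h => ht (toColex.injective h).symm
    exact Prod.Lex.toLex_strictMono (Prod.mk_lt_mk_of_le_of_lt hweight hcolex)
  mul_lt t s s' h := by
    simp only [map_add]
    exact add_lt_add_right h (toLex (weight w t, toColex t))
  std i j hij := by
    have hweight : weight w (single i 1) ≤ weight w (single j 1) := by
      simpa only [weight_single, one_smul] using hw hij.le
    exact Prod.Lex.toLex_strictMono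
      (Prod.mk_lt_mk_of_le_of_lt hweight (Colex.single_strictMono hij))

theorem Cle.weight_le {M : Type*} [AddCommMonoid M] [LinearOrder M] [IsOrderedCancelAddMonoid M]
    {a b : ℕ+ →₀ ℕ} (h : Cle a b) {w : ℕ+ → M} (hw : Monotone w) (hw₁ : 0 ≤ w 1) :
    weight w a ≤ weight w b := by
  rcases h (.ofWeight w hw hw₁) with rfl | hlt
  · exact le_rfl
  · exact Prod.Lex.monotone_fst _ _ hlt.le

section TailSum

variable {ι : Type*} [Preorder ι]

/-- The tail sum `∑_{i ≥ k} c_i` of an exponent vector `c`, encoded as the weighted degree whose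
weight is the indicator function of `[k, ∞)`. -/
noncomputable def tailSum (k : ι) : (ι →₀ ℕ) →+ ℕ :=
  weight ((Set.Ici k).indicator 1)

theorem tailSum_single_one_of_le {k i : ι} (h : k ≤ i) : tailSum k (single i 1) = 1 := by
  simp [tailSum, weight_single, h]

theorem tailSum_eq_zero_iff {k : ι} {c : ι →₀ ℕ} : tailSum k c = 0 ↔ ∀ i, k ≤ i → c i = 0 := by
  simp only [tailSum, weight_apply, Finsupp.sum, smul_eq_mul, Finset.sum_eq_zero_iff,
    mem_support_iff, mul_eq_zero, Set.indicator_apply_eq_zero, Set.mem_Ici, Pi.one_apply,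
    one_ne_zero, imp_false]
  exact forall_congr' fun i => by tauto

end TailSum

theorem Cle.tailSum_le {a b : ℕ+ →₀ ℕ} (h : Cle a b) (k : ℕ+) : tailSum k a ≤ tailSum k b := by
  have hmono : Monotone ((Set.Ici k).indicator (1 : ℕ+ → ℕ)) := by
    intro i j hij
    by_cases hki : k ≤ i
    · simp [hki, hki.trans hij]
    · simp [hki]
  exact h.weight_le hmono (Nat.zero_le _)

theorem CStep.lt (T : CStdTermOrder) {c c' : ℕ+ →₀ ℕ} (h : CStep c c') : T.lt c c' := by
  rcases h with ⟨i, rfl⟩ | ⟨i, hi, h⟩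
  · simpa only [add_zero] using T.mul_lt c 0 (single i 1) (T.one_lt _ (by simp))
  · obtain ⟨d, rfl⟩ : ∃ d, c = d + single i 1 := ⟨_, (sub_add_single_one_cancel hi.ne').symm⟩
    obtain rfl : c' = d + single (i + 1) 1 := by
      rw [add_right_comm] at h
      exact add_right_cancel h
    exact T.mul_lt d _ _ (T.std i (i + 1) (PNat.lt_add_right i 1))

theorem cle_of_reflTransGen_cStep {a b : ℕ+ →₀ ℕ} (h : ReflTransGen CStep a b) : Cle a b := by
  intro T
  induction h with
  | refl => exact .inl rfl
  | tail _ hstep ih =>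
    rcases ih with rfl | hlt
    · exact .inr (hstep.lt T)
    · exact .inr (T.trans _ _ _ hlt (hstep.lt T))

theorem CStep.add_right {c c' : ℕ+ →₀ ℕ} (h : CStep c c') (t : ℕ+ →₀ ℕ) :
    CStep (c + t) (c' + t) := by
  rcases h with ⟨i, rfl⟩ | ⟨i, hi, h⟩
  · exact .inl ⟨i, add_right_comm _ _ _⟩
  · exact .inr ⟨i, Nat.add_pos_left hi _, by rw [add_right_comm, h, add_right_comm]⟩

theorem reflTransGen_cStep_add {a b c d : ℕ+ →₀ ℕ} (hab : ReflTransGen CStep a b)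
    (hcd : ReflTransGen CStep c d) : ReflTransGen CStep (a + c) (b + d) := by
  have hleft : ReflTransGen CStep (a + c) (b + c) := hab.lift (· + c) fun _ _ h => h.add_right c
  have hright : ReflTransGen CStep (c + b) (d + b) := hcd.lift (· + b) fun _ _ h => h.add_right b
  rw [add_comm c, add_comm d] at hright
  exact hleft.trans hright

theorem reflTransGen_cStep_single_of_le {i j : ℕ+} (hij : i ≤ j) :
    ReflTransGen CStep (single i 1) (single j 1) := by
  have hstep (k : ℕ+) : CStep (single k 1) (single (k + 1) 1) :=
    .inr ⟨k, by simp, add_comm _ _⟩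
  exact (reflTransGen_of_succ_of_le (fun k l => CStep (single k 1) (single l 1))
    (fun k _ => hstep k) hij).lift (single · 1) fun _ _ h => h

theorem finsupp_nat_induction_on_max {ι : Type*} [LinearOrder ι] {motive : (ι →₀ ℕ) → Prop}
    (a : ι →₀ ℕ) (zero : motive 0)
    (add_single : ∀ a n, (∀ i, n < i → a i = 0) → motive a → motive (a + single n 1)) :
    motive a := by
  induction a using Finsupp.induction_on_max₂ with
  | zero => exact zero
  | add_single n r a hmax _ ih =>
    have hsupp (i : ι) (hi : n < i) : a i = 0 :=
      notMem_support_iff.1 fun hmem => (hmax i hmem).not_gt hi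
    have hmultiple (s : ℕ) : motive (a + single n s) := by
      induction s with
      | zero => simpa only [single_zero, add_zero] using ih
      | succ s ihs =>
        rw [single_add, ← add_assoc]
        refine add_single _ n (fun i hi => ?_) ihs
        rw [Finsupp.add_apply, hsupp i hi, single_eq_of_ne hi.ne', add_zero]
    exact hmultiple r

theorem reflTransGen_cStep_zero (b : ℕ+ →₀ ℕ) : ReflTransGen CStep 0 b := by
  induction b using finsupp_nat_induction_on_max with
  | zero => exact .refl
  | add_single b n _ ih => exact ih.tail (.inl ⟨n, rfl⟩)

theorem reflTransGen_cStep_of_tailSum_le {a b : ℕ+ →₀ ℕ}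
    (h : ∀ k, tailSum k a ≤ tailSum k b) : ReflTransGen CStep a b := by
  induction a using finsupp_nat_induction_on_max generalizing b with
  | zero => exact reflTransGen_cStep_zero b
  | add_single a n ha ih =>
    have hpos : tailSum n b ≠ 0 := by
      have hn := h n
      rw [map_add, tailSum_single_one_of_le le_rfl] at hn
      omega
    obtain ⟨m, hnm, hbm⟩ : ∃ m, n ≤ m ∧ b m ≠ 0 := by
      simpa only [ne_eq, tailSum_eq_zero_iff, not_forall, exists_prop] using hpos
    obtain ⟨b', rfl⟩ : ∃ b', b = b' + single m 1 := ⟨_, (sub_add_single_one_cancel hbm).symm⟩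
    refine reflTransGen_cStep_add (ih fun k => ?_) (reflTransGen_cStep_single_of_le hnm)
    rcases le_or_gt k n with hkn | hnk
    · simpa only [map_add, tailSum_single_one_of_le, hkn, hkn.trans hnm, add_le_add_iff_right]
        using h k
    · have htail : tailSum k a = 0 := tailSum_eq_zero_iff.2 fun i hi => ha i (hnk.trans_le hi)
      exact htail.trans_le (Nat.zero_le _)

/-- `a ≤_𝔠 b` iff `b` is obtained from `a` by a finite sequence of the
elementary steps. -/
theorem stmt12 (a b : ℕ+ →₀ ℕ) :
    Cle a b ↔ Relation.ReflTransGen CStep a b :=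
  ⟨fun h => reflTransGen_cStep_of_tailSum_le h.tailSum_le, cle_of_reflTransGen_cStep⟩
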